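/- arXiv:1511.03993 — 2 statements merged into one kernel-verified Lean document; each statement's English description precedes it below -/
import Mathlib

section
/- There exist seven quintuples of real numbers (u0, u1, u2, x2, x3) satisfying g0 = g1 = g2 = g3 = g4 = 0, one in each of the following boxes: (i) 0.30 < u0 < 0.31, 0.23 < u1 < 0.24, 0.11 < u2 < 0.12, 1.003 < x2 < 1.004, 0.278 < x3 < 0.279; (ii) 0.43 < u0 < 0.44, 0.27 < u1 < 0.28, 1.41 < u2 < 1.42, 1.008 < x2 < 1.009, 0.379 < x3 < 0.380; (iii) 0.33 < u0 < 0.34, 0.236 < u1 < 0.237, 0.36 < u2 < 0.37, 0.312 < x2 < 0.313, 1.0008 < x3 < 1.0009; (iv) 0.28 < u0 < 0.29, 0.36 < u1 < 0.37, 0.14 < u2 < 0.15, 0.287 < x2 < 0.288, 1.002 < x3 < 1.003; (v) 0.77 < u0 < 0.78, 0.19 < u1 < 0.20, 0.11 < u2 < 0.12, 0.526 < x2 < 0.527, 1.08 < x3 < 1.09; (vi) 1.58 < u0 < 1.59, 0.30 < u1 < 0.31, 1.32 < u2 < 1.33, 1.23 < x2 < 1.24, 1.35 < x3 < 1.36;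 (vii) 2.38 < u0 < 2.39, 0.30 < u1 < 0.31, 0.17 < u2 < 0.18, 1.62 < x2 < 1.63, 2.22 < x3 < 2.23. (These give seven non-isometric non-naturally reductive left-invariant Einstein metrics on E7 associated to the subgroup SU(5)xSU(3)xU(1).) -/
noncomputable def g0 (u0 u1 u2 x2 x3 : ℝ) : ℝ :=
  4*u0*u1*x2 ^ 2*x3 ^ 2 + 6*u0*u1*x2 ^ 2 + 8*u0*u1*x3 ^ 2 - 9*u1 ^ 2*x2 ^ 2*x3 ^ 2 - u1 ^ 2*x2 ^ 2 - 3*u1 ^ 2*x3 ^ 2 - 5*x2 ^ 2*x3 ^ 2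

noncomputable def g1 (u0 u1 u2 x2 x3 : ℝ) : ℝ :=
  9*u1 ^ 2*u2*x2 ^ 2*x3 ^ 2 + u1 ^ 2*u2*x2 ^ 2 + 3*u1 ^ 2*u2*x3 ^ 2 - 10*u1*u2 ^ 2*x2 ^ 2*x3 ^ 2 - 5*u1*u2 ^ 2*x3 ^ 2 - 3*u1*x2 ^ 2*x3 ^ 2 + 5*u2*x2 ^ 2*x3 ^ 2

noncomputable def g2 (u0 u1 u2 x2 x3 : ℝ) : ℝ :=
  2*u0*u2*x2 ^ 2*x3 + 108*u1*u2*x2 ^ 2*x3 + 190*u2 ^ 2*x2 ^ 2*x3 + 75*u2 ^ 2*x3 + 90*u2*x2 ^ 3*x3 + 30*u2*x2 ^ 3 - 540*u2*x2 ^ 2*x3 + 30*u2*x2*x3 ^ 2 - 30*u2*x2 + 45*x2 ^ 2*x3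

noncomputable def g3 (u0 u1 u2 x2 x3 : ℝ) : ℝ :=
  -u0*x2 ^ 2*x3 + 4*u0*x3 - 54*u1*x2 ^ 2*x3 + 36*u1*x3 - 20*u2*x2 ^ 2*x3 + 20*u2*x3 - 90*x2 ^ 3*x3 - 45*x2 ^ 3 + 270*x2 ^ 2*x3 + 15*x2*x3 ^ 2 - 180*x2*x3 + 45*x2

noncomputable def g4 (u0 u1 u2 x2 x3 : ℝ) : ℝ :=
  9*u0*x2 ^ 2 - 4*u0*x3 ^ 2 + 36*u1*x2 ^ 2 - 36*u1*x3 ^ 2 - 20*u2*x3 ^ 2 + 45*x2 ^ 3*x3 ^ 2 + 120*x2 ^ 3*x3 - 270*x2 ^ 2*x3 - 120*x2*x3 ^ 3 + 180*x2*x3 ^ 2 + 60*x2*x3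

/-!
A rational matrix `A` close to the inverse of the Jacobian of `g = (g0, …, g4)` near an approximate
zero `c` turns `A ∘ g` into a small perturbation of the identity on a ball around `c` (Krawczyk's
test).  By the quantitative inverse function theorem `A ∘ g` then maps this ball onto a ball around
`A (g c)` that contains `0`, and `A` is injective.  Whether `A` and `c` are good enough is a finite
set of inequalities between rational numbers, obtained by differentiating and bounding the
polynomials symbolically, and these are evaluated by the kernel.
-/

open Metric Matrix

section Krawczyk

theorem approximatesLinearOn_of_norm_hasFDerivAt_sub_le {E F : Type*}
    [NormedAddCommGroup E] [NormedSpace ℝ E] [NormedAddCommGroup F] [NormedSpace ℝ F]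
    {f : E → F} {f' : E → E →L[ℝ] F} {φ : E →L[ℝ] F} {s : Set E} {κ : NNReal} (hs : Convex ℝ s)
    (hf : ∀ x ∈ s, HasFDerivAt f (f' x) x) (hφ : ∀ x ∈ s, ‖f' x - φ‖ ≤ κ) :
    ApproximatesLinearOn f φ s κ := fun _ hx _ hy =>
  hs.norm_image_sub_le_of_norm_hasFDerivWithin_le'
    (fun z hz => (hf z hz).hasFDerivWithinAt) hφ hy hx

variable {E : Type*} [NormedAddCommGroup E] [NormedSpace ℝ E]

theorem exists_mem_closedBall_eq_zero_of_approximatesLinearOn_id [CompleteSpace E]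
    {f : E → E} {c : E} {r : ℝ} {κ : NNReal} (hr : 0 ≤ r)
    (hf : ApproximatesLinearOn f (ContinuousLinearMap.id ℝ E) (closedBall c r) κ)
    (hc : ‖f c‖ ≤ (1 - κ) * r) : ∃ x ∈ closedBall c r, f x = 0 := by
  let idInverse : (ContinuousLinearMap.id ℝ E).NonlinearRightInverse :=
    ⟨id, 1, fun y => by simp, fun _ => rfl⟩
  refine hf.surjOn_closedBall_of_nonlinearRightInverse idInverse hr subset_rfl ?_
  simpa [idInverse] using hc

theorem injective_of_norm_mul_sub_one_lt_one [FiniteDimensional ℝ E] {A B : E →L[ℝ] E}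
    (h : ‖A * B - 1‖ < 1) : Function.Injective A := by
  have : CompleteSpace E := FiniteDimensional.complete ℝ E
  have hAB : IsUnit (A * B) := by
    rw [← sub_sub_cancel 1 (A * B)]
    exact isUnit_one_sub_of_norm_lt_one (norm_sub_rev (A * B) 1 ▸ h)
  obtain ⟨C, hC⟩ := hAB.exists_right_inv
  have hA : Function.Surjective (A : E →ₗ[ℝ] E) := fun y =>
    ⟨B (C y), DFunLike.congr_fun hC y⟩
  exact LinearMap.injective_iff_surjective.2 hA

theorem exists_mem_closedBall_eq_zero_of_norm_mul_fderiv_sub_one_le [FiniteDimensional ℝ E]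
    {f : E → E} {f' : E → E →L[ℝ] E} (A : E →L[ℝ] E) {c : E} {r κ : ℝ} (hκ : κ < 1)
    (hf : ∀ x ∈ closedBall c r, HasFDerivAt f (f' x) x)
    (hA : ∀ x ∈ closedBall c r, ‖A * f' x - 1‖ ≤ κ) (hc : ‖A (f c)‖ ≤ (1 - κ) * r) :
    ∃ x ∈ closedBall c r, f x = 0 := by
  have : CompleteSpace E := FiniteDimensional.complete ℝ E
  have hr : 0 ≤ r := nonneg_of_mul_nonneg_right ((norm_nonneg _).trans hc) (sub_pos.2 hκ)
  have hAc := hA c (mem_closedBall_self hr)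
  lift κ to NNReal using (norm_nonneg _).trans hAc
  have happrox : ApproximatesLinearOn (A ∘ f) (.id ℝ E) (closedBall c r) κ :=
    approximatesLinearOn_of_norm_hasFDerivAt_sub_le (convex_closedBall c r)
      (fun x hx => A.hasFDerivAt.comp x (hf x hx)) hA
  obtain ⟨x, hx, hAx⟩ :=
    exists_mem_closedBall_eq_zero_of_approximatesLinearOn_id hr happrox hc
  exact ⟨x, hx, injective_of_norm_mul_sub_one_lt_one (hAc.trans_lt hκ) (by simpa using hAx)⟩

theorem norm_toContinuousLinearMap_toLin'_le {m n : Type*} [Fintype m] [Fintype n]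
    [DecidableEq n] {M : Matrix m n ℝ} {κ : ℝ} (hκ : 0 ≤ κ) (hM : ∀ i, ∑ j, |M i j| ≤ κ) :
    ‖(toLin' M).toContinuousLinearMap‖ ≤ κ := by
  refine ContinuousLinearMap.opNorm_le_bound _ hκ fun v => ?_
  refine (pi_norm_le_iff_of_nonneg (by positivity)).2 fun i => ?_
  calc ‖∑ j, M i j * v j‖ ≤ ∑ j, |M i j| * ‖v‖ :=
        norm_sum_le_of_le _ fun j _ => by
          rw [norm_mul]
          exact mul_le_mul_of_nonneg_left (norm_le_pi_norm v j) (norm_nonneg _)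
    _ = (∑ j, |M i j|) * ‖v‖ := (Finset.sum_mul ..).symm
    _ ≤ κ * ‖v‖ := mul_le_mul_of_nonneg_right (hM i) (norm_nonneg v)

theorem exists_eq_zero_of_sum_abs_mul_jacobian_sub_one_le {n : Type*} [Fintype n] [DecidableEq n]
    {f : (n → ℝ) → n → ℝ} {J : (n → ℝ) → Matrix n n ℝ} (A : Matrix n n ℝ) {c : n → ℝ} {r κ : ℝ}
    (hr : 0 ≤ r) (hκ₀ : 0 ≤ κ) (hκ₁ : κ < 1)
    (hf : ∀ x, HasFDerivAt f (toLin' (J x)).toContinuousLinearMap x)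
    (hJ : ∀ x, (∀ i, |x i - c i| ≤ r) → ∀ i, ∑ j, |(A * J x - 1) i j| ≤ κ)
    (hc : ∀ i, |(A *ᵥ f c) i| ≤ (1 - κ) * r) :
    ∃ x, (∀ i, |x i - c i| ≤ r) ∧ f x = 0 := by
  have mem_ball (x : n → ℝ) : x ∈ closedBall c r ↔ ∀ i, |x i - c i| ≤ r := by
    rw [mem_closedBall_iff_norm, pi_norm_le_iff_of_nonneg hr]
    rfl
  simp only [← mem_ball] at hJ ⊢
  refine exists_mem_closedBall_eq_zero_of_norm_mul_fderiv_sub_one_le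
    (toLin' A).toContinuousLinearMap hκ₁ (fun x _ => hf x) (fun x hx => ?_) ?_
  · convert norm_toContinuousLinearMap_toLin'_le hκ₀ (hJ x hx) using 2
    ext v : 1
    simp
  · exact (pi_norm_le_iff_of_nonneg (mul_nonneg (sub_pos.2 hκ₁).le hr)).2 hc

end Krawczyk

/-- Polynomial expressions with integer coefficients in the variables `σ`: a computable
counterpart of `MvPolynomial σ ℤ`, on which derivatives and bounds reduce in the kernel. -/
inductive PolyExpr (σ : Type*) where
  | const (k : ℤ)
  | var (i : σ)
  | add (p q : PolyExpr σ)
  | mul (p q : PolyExpr σ)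

namespace PolyExpr

variable {σ : Type*}

/-- Addition of polynomial expressions, dropping summands `0` to keep derivatives small. -/
def reducedAdd : PolyExpr σ → PolyExpr σ → PolyExpr σ
  | const 0, q => q
  | p, const 0 => p
  | p, q => add p q

/-- Multiplication of polynomial expressions, simplifying right factors `0` and `1` to keep
derivatives small. -/
def reducedMul : PolyExpr σ → PolyExpr σ → PolyExpr σ
  | _, const 0 => const 0
  | p, const 1 => p
  | p, q => mul p q

instance : Add (PolyExpr σ) := ⟨reducedAdd⟩
instance : Mul (PolyExpr σ) := ⟨reducedMul⟩
instance : Neg (PolyExpr σ) := ⟨fun p => const (-1) * p⟩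
instance : Sub (PolyExpr σ) := ⟨fun p q => p + -q⟩
instance (n : ℕ) : OfNat (PolyExpr σ) n := ⟨const n⟩
instance : Pow (PolyExpr σ) ℕ := ⟨fun p n => n.rec 1 fun _ q => p * q⟩

section Eval

variable {R : Type*} [CommRing R]

/-- The value of a polynomial expression at a point. -/
def eval (x : σ → R) : PolyExpr σ → R
  | const k => k
  | var i => x i
  | add p q => p.eval x + q.eval x
  | mul p q => p.eval x * q.eval x

@[simp] theorem eval_var (x : σ → R) (i : σ) : (var i).eval x = x i := rfl

@[simp] theorem eval_add (x : σ → R) (p q : PolyExpr σ) :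
    (p + q).eval x = p.eval x + q.eval x := by
  change (reducedAdd p q).eval x = _
  unfold reducedAdd
  split <;> simp [eval]

@[simp] theorem eval_mul (x : σ → R) (p q : PolyExpr σ) :
    (p * q).eval x = p.eval x * q.eval x := by
  change (reducedMul p q).eval x = _
  unfold reducedMul
  split <;> simp [eval]

@[simp] theorem eval_neg (x : σ → R) (p : PolyExpr σ) : (-p).eval x = -p.eval x :=
  (eval_mul x (const (-1)) p).trans (by simp [eval])

@[simp] theorem eval_sub (x : σ → R) (p q : PolyExpr σ) :
    (p - q).eval x = p.eval x - q.eval x :=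
  (eval_add x p (-q)).trans (by rw [eval_neg, sub_eq_add_neg])

@[simp] theorem eval_ofNat (x : σ → R) (n : ℕ) [n.AtLeastTwo] :
    (ofNat(n) : PolyExpr σ).eval x = ofNat(n) :=
  Int.cast_natCast n

@[simp] theorem eval_pow (x : σ → R) (p : PolyExpr σ) (n : ℕ) :
    (p ^ n).eval x = p.eval x ^ n := by
  induction n with
  | zero => exact Int.cast_one.trans (pow_zero _).symm
  | succ n ih => rw [pow_succ', ← ih]; exact eval_mul x p (p ^ n)

theorem eval_map {S : Type*} [CommRing S] (φ : R →+* S) (x : σ → R) (p : PolyExpr σ) :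
    p.eval (fun i => φ (x i)) = φ (p.eval x) := by
  induction p with
  | const k => exact (map_intCast φ k).symm
  | var i => rfl
  | add p q hp hq => simp only [eval, hp, hq, map_add]
  | mul p q hp hq => simp only [eval, hp, hq, map_mul]

end Eval

section Derivative

variable [DecidableEq σ]

/-- The formal partial derivative of a polynomial expression. -/
def pderiv (j : σ) : PolyExpr σ → PolyExpr σ
  | const _ => 0
  | var i => if i = j then 1 else 0
  | add p q => p.pderiv j + q.pderiv j
  | mul p q => p * q.pderiv j + q * p.pderiv j

/-- The Jacobian matrix of a system of polynomial expressions at a point. -/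
def jacobian {τ R : Type*} [CommRing R] (p : τ → PolyExpr σ) (x : σ → R) : Matrix τ σ R :=
  .of fun k j => ((p k).pderiv j).eval x

variable [Fintype σ] {𝕜 : Type*} [NontriviallyNormedField 𝕜]

theorem hasFDerivAt_eval (p : PolyExpr σ) (x : σ → 𝕜) :
    HasFDerivAt (fun y => p.eval y)
      (∑ j, (p.pderiv j).eval x • (ContinuousLinearMap.proj j : (σ → 𝕜) →L[𝕜] 𝕜)) x := by
  have eval_zero : (0 : PolyExpr σ).eval x = 0 := Int.cast_zero
  have eval_one : (1 : PolyExpr σ).eval x = 1 := Int.cast_one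
  induction p with
  | const k =>
    exact (hasFDerivAt_const (k : 𝕜) x).congr_fderiv (by ext v; simp [pderiv, eval_zero])
  | var i =>
    exact (hasFDerivAt_apply i x).congr_fderiv
      (by ext v; simp [pderiv, apply_ite (eval x), eval_zero, eval_one, -ite_smul])
  | add p q hp hq =>
    exact (hp.fun_add hq).congr_fderiv
      (by ext v; simp [pderiv, add_mul, Finset.sum_add_distrib])
  | mul p q hp hq =>
    exact (hp.fun_mul hq).congr_fderiv
      (by ext v; simp [pderiv, add_mul, mul_assoc, Finset.sum_add_distrib, Finset.mul_sum])

theorem hasFDerivAt_system [CompleteSpace 𝕜] {τ : Type*} [Finite τ] (p : τ → PolyExpr σ)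
    (x : σ → 𝕜) :
    HasFDerivAt (fun y k => (p k).eval y) (toLin' (jacobian p x)).toContinuousLinearMap x := by
  refine hasFDerivAt_pi'.2 fun k => ((p k).hasFDerivAt_eval x).congr_fderiv ?_
  ext v : 1
  simp [jacobian, mulVec, dotProduct]

end Derivative

section Enclosure

/-- The value at `y` of the majorant of a polynomial expression, in which every coefficient is
replaced by its absolute value. -/
def majorant (y : σ → ℚ) : PolyExpr σ → ℚ
  | const k => |k|
  | var i => y i
  | add p q => p.majorant y + q.majorant y
  | mul p q => p.majorant y * q.majorant y

theorem abs_eval_le_majorant (p : PolyExpr σ) {x : σ → ℝ} {y : σ → ℚ} (hx : ∀ i, |x i| ≤ y i) :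
    |p.eval x| ≤ p.majorant y := by
  induction p with
  | const k => simp [eval, majorant]
  | var i => exact hx i
  | add p q hp hq =>
    simpa only [eval, majorant, Rat.cast_add] using (abs_add_le _ _).trans (add_le_add hp hq)
  | mul p q hp hq =>
    simpa only [eval, majorant, Rat.cast_mul, abs_mul] using
      mul_le_mul hp hq (abs_nonneg _) ((abs_nonneg _).trans hp)

/-- A bound for the variation of `p` on the cube of radius `r` around `c`, obtained from the
majorant of `p`. -/
def deviationBound (c : σ → ℚ) (r : ℚ) (p : PolyExpr σ) : ℚ :=
  p.majorant (fun i => |c i| + r) - p.majorant fun i => |c i|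

variable {c : σ → ℚ} {r : ℚ} {x : σ → ℝ}

theorem eval_ratCast {K : Type*} [Field K] [CharZero K] (p : PolyExpr σ) :
    p.eval (fun i => (c i : K)) = (p.eval c : ℚ) :=
  eval_map (Rat.castHom K) c p

theorem abs_mul_sub_mul_le_of_abs_sub_le {R : Type*} [CommRing R] [LinearOrder R]
    [IsStrictOrderedRing R] {s t a b P₀ P₁ Q₀ Q₁ : R} (hs : |s - a| ≤ P₁ - P₀)
    (ht : |t - b| ≤ Q₁ - Q₀) (ha : |a| ≤ P₀) (htQ : |t| ≤ Q₁) :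
    |s * t - a * b| ≤ P₁ * Q₁ - P₀ * Q₀ :=
  calc |s * t - a * b| = |(s - a) * t + a * (t - b)| := by congr 1; ring
    _ ≤ |s - a| * |t| + |a| * |t - b| := by
        simpa only [abs_mul] using abs_add_le ((s - a) * t) (a * (t - b))
    _ ≤ (P₁ - P₀) * Q₁ + P₀ * (Q₁ - Q₀) :=
        add_le_add (mul_le_mul hs htQ (abs_nonneg _) ((abs_nonneg _).trans hs))
          (mul_le_mul ha ht (abs_nonneg _) ((abs_nonneg _).trans ha))
    _ = P₁ * Q₁ - P₀ * Q₀ := by ring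

theorem abs_eval_sub_eval_le (p : PolyExpr σ) (hx : ∀ i, |x i - c i| ≤ r) :
    |p.eval x - (p.eval c : ℚ)| ≤ p.deviationBound c r := by
  have abs_x_le (i : σ) : |x i| ≤ ((|c i| + r : ℚ) : ℝ) := by
    push_cast
    linarith [hx i, abs_sub_abs_le_abs_sub (x i) (c i)]
  have abs_c_le (p : PolyExpr σ) : |((p.eval c : ℚ) : ℝ)| ≤ p.majorant fun i => |c i| := by
    rw [← eval_ratCast]
    exact p.abs_eval_le_majorant fun i => (Rat.cast_abs (c i)).ge
  simp only [deviationBound]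
  induction p with
  | const k => simp [eval, majorant]
  | var i => simpa [eval, majorant] using hx i
  | add p q hp hq =>
    simp only [eval, majorant, Rat.cast_add, add_sub_add_comm, Rat.cast_sub] at hp hq ⊢
    exact (abs_add_le _ _).trans (add_le_add hp hq)
  | mul p q hp hq =>
    simp only [eval, majorant, Rat.cast_mul, Rat.cast_sub] at hp hq ⊢
    exact abs_mul_sub_mul_le_of_abs_sub_le hp hq (abs_c_le p) (q.abs_eval_le_majorant abs_x_le)

variable [Fintype σ] [DecidableEq σ]

/-- The conditions of Krawczyk's existence test for a zero of the square system `p` in the cube of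
radius `r` around `c`: `A` is a preconditioner (an approximate inverse of the Jacobian at `c`),
and `κ` bounds the `ℓ^∞` operator norm of `A * jacobian p x - 1` for `x` in the cube. -/
structure IsKrawczykCertificate (p : σ → PolyExpr σ) (c : σ → ℚ) (r κ : ℚ)
    (A : Matrix σ σ ℚ) : Prop where
  radius_nonneg : 0 ≤ r
  factor_nonneg : 0 ≤ κ
  factor_lt_one : κ < 1
  abs_residual_le : ∀ i, |(A *ᵥ fun k => (p k).eval c) i| ≤ (1 - κ) * r
  sum_defect_le : ∀ i, ∑ j, (|(A * jacobian p c - 1) i j| +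
    ∑ k, |A i k| * ((p k).pderiv j).deviationBound c r) ≤ κ

theorem abs_mul_jacobian_sub_one_le (p : σ → PolyExpr σ) (A : Matrix σ σ ℚ)
    (hx : ∀ i, |x i - c i| ≤ r) (i j : σ) :
    |(A.map (↑) * jacobian p x - 1 : Matrix σ σ ℝ) i j| ≤
      (|(A * jacobian p c - 1) i j| +
        ∑ k, |A i k| * ((p k).pderiv j).deviationBound c r : ℚ) := by
  have split : (A.map (↑) * jacobian p x - 1 : Matrix σ σ ℝ) i j =
      ((A * jacobian p c - 1) i j : ℚ) +
        ∑ k, (A i k : ℝ) * (((p k).pderiv j).eval x - (((p k).pderiv j).eval c : ℚ)) := by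
    simp only [Matrix.sub_apply, Matrix.mul_apply, Matrix.map_apply, Matrix.one_apply, jacobian,
      of_apply, mul_sub, Finset.sum_sub_distrib]
    split_ifs <;> push_cast <;> ring
  rw [split]
  push_cast
  refine (abs_add_le _ _).trans (add_le_add_right ?_ _)
  refine (Finset.abs_sum_le_sum_abs _ _).trans (Finset.sum_le_sum fun k _ => ?_)
  rw [abs_mul]
  exact mul_le_mul_of_nonneg_left (abs_eval_sub_eval_le _ hx) (abs_nonneg _)

theorem IsKrawczykCertificate.exists_eval_eq_zero {p : σ → PolyExpr σ} {κ : ℚ}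
    {A : Matrix σ σ ℚ} (h : IsKrawczykCertificate p c r κ A) :
    ∃ x : σ → ℝ, (∀ i, |x i - c i| ≤ r) ∧ ∀ k, (p k).eval x = 0 := by
  have residual (i : σ) : (A.map (↑) *ᵥ fun k => (p k).eval fun i => (c i : ℝ)) i =
      ((A *ᵥ fun k => (p k).eval c) i : ℚ) := by
    simp [mulVec, dotProduct, eval_ratCast]
  obtain ⟨x, hx, hzero⟩ := exists_eq_zero_of_sum_abs_mul_jacobian_sub_one_le
    (f := fun x k => (p k).eval x) (J := jacobian p) (A.map (↑)) (c := fun i => (c i : ℝ))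
    (r := r) (κ := κ) (mod_cast h.radius_nonneg) (mod_cast h.factor_nonneg)
    (mod_cast h.factor_lt_one) (hasFDerivAt_system p)
    (fun x hx i => (Finset.sum_le_sum fun j _ => abs_mul_jacobian_sub_one_le p A hx i j).trans
      (mod_cast h.sum_defect_le i))
    (fun i => by rw [residual]; exact_mod_cast h.abs_residual_le i)
  exact ⟨x, hx, congrFun hzero⟩

end Enclosure

end PolyExpr

section Einstein

open PolyExpr

/-- The system `(g0, …, g4)` in the variables `(u0, u1, u2, x2, x3)`. -/
def einsteinSystem : Fin 5 → PolyExpr (Fin 5) :=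
  let u0 := var 0; let u1 := var 1; let u2 := var 2; let x2 := var 3; let x3 := var 4
  ![4 * u0 * u1 * x2 ^ 2 * x3 ^ 2 + 6 * u0 * u1 * x2 ^ 2 + 8 * u0 * u1 * x3 ^ 2 -
      9 * u1 ^ 2 * x2 ^ 2 * x3 ^ 2 - u1 ^ 2 * x2 ^ 2 - 3 * u1 ^ 2 * x3 ^ 2 - 5 * x2 ^ 2 * x3 ^ 2,
    9 * u1 ^ 2 * u2 * x2 ^ 2 * x3 ^ 2 + u1 ^ 2 * u2 * x2 ^ 2 + 3 * u1 ^ 2 * u2 * x3 ^ 2 -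
      10 * u1 * u2 ^ 2 * x2 ^ 2 * x3 ^ 2 - 5 * u1 * u2 ^ 2 * x3 ^ 2 - 3 * u1 * x2 ^ 2 * x3 ^ 2 +
      5 * u2 * x2 ^ 2 * x3 ^ 2,
    2 * u0 * u2 * x2 ^ 2 * x3 + 108 * u1 * u2 * x2 ^ 2 * x3 + 190 * u2 ^ 2 * x2 ^ 2 * x3 +
      75 * u2 ^ 2 * x3 + 90 * u2 * x2 ^ 3 * x3 + 30 * u2 * x2 ^ 3 - 540 * u2 * x2 ^ 2 * x3 +
      30 * u2 * x2 * x3 ^ 2 - 30 * u2 * x2 + 45 * x2 ^ 2 * x3,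
    -u0 * x2 ^ 2 * x3 + 4 * u0 * x3 - 54 * u1 * x2 ^ 2 * x3 + 36 * u1 * x3 -
      20 * u2 * x2 ^ 2 * x3 + 20 * u2 * x3 - 90 * x2 ^ 3 * x3 - 45 * x2 ^ 3 + 270 * x2 ^ 2 * x3 +
      15 * x2 * x3 ^ 2 - 180 * x2 * x3 + 45 * x2,
    9 * u0 * x2 ^ 2 - 4 * u0 * x3 ^ 2 + 36 * u1 * x2 ^ 2 - 36 * u1 * x3 ^ 2 - 20 * u2 * x3 ^ 2 +
      45 * x2 ^ 3 * x3 ^ 2 + 120 * x2 ^ 3 * x3 - 270 * x2 ^ 2 * x3 - 120 * x2 * x3 ^ 3 +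
      180 * x2 * x3 ^ 2 + 60 * x2 * x3]

theorem eval_einsteinSystem (x : Fin 5 → ℝ) (k : Fin 5) :
    (einsteinSystem k).eval x = ![g0, g1, g2, g3, g4] k (x 0) (x 1) (x 2) (x 3) (x 4) := by
  fin_cases k <;> simp [einsteinSystem, g0, g1, g2, g3, g4]

/-- Approximations, rounded to six decimals, of the seven zeros of `einsteinSystem`. -/
def einsteinCenter : Fin 7 → Fin 5 → ℚ :=
  ![![0.305877, 0.231620, 0.117193, 1.003531, 0.278280],
    ![0.434655, 0.277337, 1.418265, 1.008619, 0.379460],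
    ![0.334451, 0.236951, 0.369785, 0.312420, 1.000864],
    ![0.286799, 0.366058, 0.149588, 0.287635, 1.002618],
    ![0.775417, 0.197157, 0.114373, 0.526664, 1.082643],
    ![1.582040, 0.306227, 1.322113, 1.230315, 1.355265],
    ![2.384639, 0.302531, 0.170154, 1.624917, 2.224612]]

/-- The inverses of the Jacobian at the points `einsteinCenter`, rounded to four decimals. -/
def einsteinPreconditioner : Fin 7 → Matrix (Fin 5) (Fin 5) ℚ :=
  ![!![-0.5436, 46.3228, 0.1984, 0.0560, 0.2077;
      0.1778, -13.6378, -0.0589, -0.0121, -0.0312;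
      -0.0054, 0.0181, -0.0100, -0.0011, 0.0012;
      -0.0635, 3.0472, 0.0131, -0.0101, 0.0126;
      -0.6155, 21.5023, 0.0919, 0.0283, 0.1102],
    !![-0.1662, 1.8188, 0.0140, 0.0543, 0.1497;
      0.0636, -0.5596, -0.0036, -0.0088, -0.0145;
      0.0160, 0.1289, 0.0082, 0.0011, -0.0052;
      -0.0383, 0.1401, 0.0010, -0.0072, 0.0105;
      -0.3562, 0.8304, 0.0068, 0.0297, 0.0855],
    !![0.3649, 5.6381, 0.0372, 0.0514, -0.0061;
      0.0466, -4.5152, -0.0480, -0.0265, -0.0025;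
      -0.1663, 7.0006, 0.0753, 0.0849, -0.0055;
      -0.0573, 2.3264, 0.0086, 0.0274, -0.0047;
      0.0080, 0.1349, -0.0002, -0.0227, -0.0229],
    !![0.2989, -3.0009, -0.0616, 0.0033, -0.0055;
      -0.0397, -2.1592, 0.0004, 0.0281, -0.0057;
      0.0028, 2.3705, -0.0303, -0.0035, -0.0016;
      -0.0062, -2.9845, -0.0653, 0.0017, -0.0047;
      0.0055, -0.2748, -0.0044, -0.0242, -0.0236],
    !![0.3392, 4.6197, 0.0736, 0.0399, -0.0040;
      0.0007, -1.3258, -0.0190, -0.0006, -0.0009;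
      0.0003, -0.0322, -0.0102, -0.0003, -0.0005;
      -0.0341, 0.3755, 0.0088, 0.0195, -0.0018;
      -0.0033, 0.4825, 0.0096, -0.0072, -0.0165],
    !![0.1009, 0.1080, 0.0017, -0.0149, -0.0059;
      0.0013, -0.0208, -0.0006, -0.0021, -0.0006;
      -0.0024, 0.0072, 0.0020, 0.0025, 0.0010;
      0.0047, 0.0178, 0, -0.0104, -0.0024;
      0.0117, 0.0351, -0.0003, -0.0194, -0.0092],
    !![0.0303, 0.2358, 0.0110, -0.0021, -0.0004;
      0.0002, -0.0324, -0.0015, -0.0007, -0.0001;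
      0.0001, 0.0006, -0.0007, -0.0003, 0;
      0.0003, 0.0378, 0.0020, -0.0035, -0.0004;
      0.0006, 0.0734, 0.0039, -0.0064, -0.0018]]

theorem isKrawczykCertificate_einstein (s : Fin 7) :
    IsKrawczykCertificate einsteinSystem (einsteinCenter s) (10 ^ (-5 : ℤ)) (1 / 2)
      (einsteinPreconditioner s) where
  radius_nonneg := by positivity
  factor_nonneg := by norm_num
  factor_lt_one := by norm_num
  abs_residual_le := by decide +kernel +revert
  sum_defect_le := by decide +kernel +revert

theorem exists_einstein_zero_of_center_mem_box (s : Fin 7)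
    {a₀ b₀ a₁ b₁ a₂ b₂ a₃ b₃ a₄ b₄ : ℝ}
    (hbox : ∀ i, ![a₀, a₁, a₂, a₃, a₄] i + 10 ^ (-5 : ℤ) < (einsteinCenter s i : ℝ) ∧
      einsteinCenter s i + 10 ^ (-5 : ℤ) < ![b₀, b₁, b₂, b₃, b₄] i) :
    ∃ u0 u1 u2 x2 x3 : ℝ,
      a₀ < u0 ∧ u0 < b₀ ∧ a₁ < u1 ∧ u1 < b₁ ∧ a₂ < u2 ∧ u2 < b₂ ∧
      a₃ < x2 ∧ x2 < b₃ ∧ a₄ < x3 ∧ x3 < b₄ ∧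
      g0 u0 u1 u2 x2 x3 = 0 ∧ g1 u0 u1 u2 x2 x3 = 0 ∧ g2 u0 u1 u2 x2 x3 = 0 ∧
      g3 u0 u1 u2 x2 x3 = 0 ∧ g4 u0 u1 u2 x2 x3 = 0 := by
  obtain ⟨x, hx, hzero⟩ := (isKrawczykCertificate_einstein s).exists_eval_eq_zero
  simp only [eval_einsteinSystem] at hzero
  have hmem (i : Fin 5) : ![a₀, a₁, a₂, a₃, a₄] i < x i ∧ x i < ![b₀, b₁, b₂, b₃, b₄] i := by
    have := abs_le.1 (hx i)
    push_cast at this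
    exact ⟨by linarith [(hbox i).1], by linarith [(hbox i).2]⟩
  exact ⟨x 0, x 1, x 2, x 3, x 4, (hmem 0).1, (hmem 0).2, (hmem 1).1, (hmem 1).2, (hmem 2).1,
    (hmem 2).2, (hmem 3).1, (hmem 3).2, (hmem 4).1, (hmem 4).2,
    hzero 0, hzero 1, hzero 2, hzero 3, hzero 4⟩

end Einstein

theorem stmt14 :
    (∃ u0 u1 u2 x2 x3 : ℝ,
      0.30 < u0 ∧ u0 < 0.31 ∧ 0.23 < u1 ∧ u1 < 0.24 ∧ 0.11 < u2 ∧ u2 < 0.12 ∧ 1.003 < x2 ∧ x2 < 1.004 ∧ 0.278 < x3 ∧ x3 < 0.279 ∧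
      g0 u0 u1 u2 x2 x3 = 0 ∧ g1 u0 u1 u2 x2 x3 = 0 ∧ g2 u0 u1 u2 x2 x3 = 0 ∧ g3 u0 u1 u2 x2 x3 = 0 ∧ g4 u0 u1 u2 x2 x3 = 0) ∧
    (∃ u0 u1 u2 x2 x3 : ℝ,
      0.43 < u0 ∧ u0 < 0.44 ∧ 0.27 < u1 ∧ u1 < 0.28 ∧ 1.41 < u2 ∧ u2 < 1.42 ∧ 1.008 < x2 ∧ x2 < 1.009 ∧ 0.379 < x3 ∧ x3 < 0.380 ∧
      g0 u0 u1 u2 x2 x3 = 0 ∧ g1 u0 u1 u2 x2 x3 = 0 ∧ g2 u0 u1 u2 x2 x3 = 0 ∧ g3 u0 u1 u2 x2 x3 = 0 ∧ g4 u0 u1 u2 x2 x3 = 0) ∧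
    (∃ u0 u1 u2 x2 x3 : ℝ,
      0.33 < u0 ∧ u0 < 0.34 ∧ 0.236 < u1 ∧ u1 < 0.237 ∧ 0.36 < u2 ∧ u2 < 0.37 ∧ 0.312 < x2 ∧ x2 < 0.313 ∧ 1.0008 < x3 ∧ x3 < 1.0009 ∧
      g0 u0 u1 u2 x2 x3 = 0 ∧ g1 u0 u1 u2 x2 x3 = 0 ∧ g2 u0 u1 u2 x2 x3 = 0 ∧ g3 u0 u1 u2 x2 x3 = 0 ∧ g4 u0 u1 u2 x2 x3 = 0) ∧
    (∃ u0 u1 u2 x2 x3 : ℝ,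
      0.28 < u0 ∧ u0 < 0.29 ∧ 0.36 < u1 ∧ u1 < 0.37 ∧ 0.14 < u2 ∧ u2 < 0.15 ∧ 0.287 < x2 ∧ x2 < 0.288 ∧ 1.002 < x3 ∧ x3 < 1.003 ∧
      g0 u0 u1 u2 x2 x3 = 0 ∧ g1 u0 u1 u2 x2 x3 = 0 ∧ g2 u0 u1 u2 x2 x3 = 0 ∧ g3 u0 u1 u2 x2 x3 = 0 ∧ g4 u0 u1 u2 x2 x3 = 0) ∧
    (∃ u0 u1 u2 x2 x3 : ℝ,
      0.77 < u0 ∧ u0 < 0.78 ∧ 0.19 < u1 ∧ u1 < 0.20 ∧ 0.11 < u2 ∧ u2 < 0.12 ∧ 0.526 < x2 ∧ x2 < 0.527 ∧ 1.08 < x3 ∧ x3 < 1.09 ∧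
      g0 u0 u1 u2 x2 x3 = 0 ∧ g1 u0 u1 u2 x2 x3 = 0 ∧ g2 u0 u1 u2 x2 x3 = 0 ∧ g3 u0 u1 u2 x2 x3 = 0 ∧ g4 u0 u1 u2 x2 x3 = 0) ∧
    (∃ u0 u1 u2 x2 x3 : ℝ,
      1.58 < u0 ∧ u0 < 1.59 ∧ 0.30 < u1 ∧ u1 < 0.31 ∧ 1.32 < u2 ∧ u2 < 1.33 ∧ 1.23 < x2 ∧ x2 < 1.24 ∧ 1.35 < x3 ∧ x3 < 1.36 ∧
      g0 u0 u1 u2 x2 x3 = 0 ∧ g1 u0 u1 u2 x2 x3 = 0 ∧ g2 u0 u1 u2 x2 x3 = 0 ∧ g3 u0 u1 u2 x2 x3 = 0 ∧ g4 u0 u1 u2 x2 x3 = 0) ∧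
    (∃ u0 u1 u2 x2 x3 : ℝ,
      2.38 < u0 ∧ u0 < 2.39 ∧ 0.30 < u1 ∧ u1 < 0.31 ∧ 0.17 < u2 ∧ u2 < 0.18 ∧ 1.62 < x2 ∧ x2 < 1.63 ∧ 2.22 < x3 ∧ x3 < 2.23 ∧
      g0 u0 u1 u2 x2 x3 = 0 ∧ g1 u0 u1 u2 x2 x3 = 0 ∧ g2 u0 u1 u2 x2 x3 = 0 ∧ g3 u0 u1 u2 x2 x3 = 0 ∧ g4 u0 u1 u2 x2 x3 = 0) := by
  refine ⟨exists_einstein_zero_of_center_mem_box 0 ?_, exists_einstein_zero_of_center_mem_box 1 ?_,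
    exists_einstein_zero_of_center_mem_box 2 ?_, exists_einstein_zero_of_center_mem_box 3 ?_,
    exists_einstein_zero_of_center_mem_box 4 ?_, exists_einstein_zero_of_center_mem_box 5 ?_,
    exists_einstein_zero_of_center_mem_box 6 ?_⟩ <;>
  simp [Fin.forall_fin_succ, einsteinCenter] <;> norm_num
end

section
/- For all real numbers x3 and u2 such that 5632*x3^3 - 9488*x3^2 + 3933*x3 - 477 = 0 and 1408*x3^2 - 1948*x3 + 53*u2 + 387 = 0, the quintuple (u0, u1, u2, x2, x3) with u0 = u1 = x3 and x2 = 1 satisfies g0 = g1 = g2 = g3 = g4 = 0. (These are naturally reductive Einstein solutions on E7(3) with u0 = u1 = x3 and x1 = x2.) -/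
/-!
On the family `u0 = u1 = x3 = x`, `x1 = x2 = 1`, `u2 = u`, the polynomials `g0` and `g3` vanish
identically, and a syzygy makes `g1` a combination of `g2` and `g4`. Up to a factor `±5 * x`, the
last two are the quadratics `53 * u ^ 2 + 28 * x * u - 90 * u + 9` and
`32 * x ^ 2 + 4 * x * u - 45 * x + 9`, so for `x ≠ 0` the Einstein equation on this family says
that `(x, u)` lies on two conics. They meet at `(1, 1)`, which is the bi-invariant metric, and at
the three points cut out by the cubic in `x` and the equation expressing `u` through `x`.
-/

section Conics

variable {R : Type*} [CommRing R] [NoZeroDivisors R] [CharZero R] {x u : R}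

theorem conic_g4_eq_zero_of_cubic_of_parabola
    (cubic : 5632 * x ^ 3 - 9488 * x ^ 2 + 3933 * x - 477 = 0)
    (parabola : 1408 * x ^ 2 - 1948 * x + 53 * u + 387 = 0) :
    32 * x ^ 2 + 4 * x * u - 45 * x + 9 = 0 := by
  have h53 : (53 : R) ≠ 0 := by norm_num
  refine (mul_eq_zero_iff_left h53).mp ?_
  linear_combination 4 * x * parabola - cubic

theorem conic_g2_eq_zero_of_cubic_of_parabola
    (cubic : 5632 * x ^ 3 - 9488 * x ^ 2 + 3933 * x - 477 = 0)
    (parabola : 1408 * x ^ 2 - 1948 * x + 53 * u + 387 = 0) :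
    53 * u ^ 2 + 28 * x * u - 90 * u + 9 = 0 := by
  have h53 : (53 : R) ≠ 0 := by norm_num
  refine (mul_eq_zero_iff_left h53).mp ?_
  -- Divide by `parabola` in `u`, then the remaining quartic in `x` by `cubic`.
  linear_combination
    (53 * u - 1408 * x ^ 2 + 1976 * x - 477) * parabola + (352 * x - 388) * cubic

end Conics

section NaturallyReductive

variable (x u : ℝ)

theorem g0_naturallyReductive : g0 x x u 1 x = 0 := by
  unfold g0
  ring

theorem g3_naturallyReductive : g3 x x u 1 x = 0 := by
  unfold g3
  ring

theorem g2_naturallyReductive :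
    g2 x x u 1 x = 5 * x * (53 * u ^ 2 + 28 * x * u - 90 * u + 9) := by
  unfold g2
  ring

theorem g4_naturallyReductive :
    g4 x x u 1 x = -5 * x * (32 * x ^ 2 + 4 * x * u - 45 * x + 9) := by
  unfold g4
  ring

theorem g1_g2_g4_syzygy_naturallyReductive :
    15 * g1 x x u 1 x + x ^ 2 * g2 x x u 1 x + 2 * x * u * g4 x x u 1 x = 0 := by
  unfold g1 g2 g4
  ring

variable {x u}

theorem g1_naturallyReductive_eq_zero (hg2 : g2 x x u 1 x = 0) (hg4 : g4 x x u 1 x = 0) :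
    g1 x x u 1 x = 0 := by
  simpa [hg2, hg4] using g1_g2_g4_syzygy_naturallyReductive x u

end NaturallyReductive

theorem stmt15 :
    ∀ x3 u2 : ℝ,
      5632 * x3 ^ 3 - 9488 * x3 ^ 2 + 3933 * x3 - 477 = 0 →
      1408 * x3 ^ 2 - 1948 * x3 + 53 * u2 + 387 = 0 →
      (g0 x3 x3 u2 1 x3 = 0 ∧ g1 x3 x3 u2 1 x3 = 0 ∧ g2 x3 x3 u2 1 x3 = 0 ∧ g3 x3 x3 u2 1 x3 = 0 ∧ g4 x3 x3 u2 1 x3 = 0) := by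
  intro x u cubic parabola
  have hg2 : g2 x x u 1 x = 0 := by
    rw [g2_naturallyReductive, conic_g2_eq_zero_of_cubic_of_parabola cubic parabola, mul_zero]
  have hg4 : g4 x x u 1 x = 0 := by
    rw [g4_naturallyReductive, conic_g4_eq_zero_of_cubic_of_parabola cubic parabola, mul_zero]
  exact ⟨g0_naturallyReductive x u, g1_naturallyReductive_eq_zero hg2 hg4, hg2,
    g3_naturallyReductive x u, hg4⟩
end
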